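/- arXiv:2602.23151 — 2 statements merged into one kernel-verified Lean document; each statement's English description precedes it below -/
import Mathlib

section
/- Let d ≥ 1 be an integer. (i) For every real a ≥ 2d one has Γ(a−d)/Γ(a) ≤ (2/a)^d, equivalently Γ(a) ≥ (a/2)^d·Γ(a−d). (ii) One has Γ(d)/Γ(d/2) ≤ (2d/e)^{d/2}. -/
open Real

noncomputable section

/-!
Both bounds hold for every real `d ≥ 1`.

(i) Since `log Γ` is convex and rises by `log x` over `[x, x + 1]`, it rises by at least `d log x`
over `[x, x + d]`, so that `x ^ d Γ(x) ≤ Γ(x + d)`; take `x = a - d ≥ a / 2`.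

(ii) By the duplication formula, the claim for `d = 2s` says that `Γ(s + 1/2) ≤ 2 √π (s / e) ^ s`.
As `Γ(x) / (x ^ (x - 1/2) e ^ (-x))` does not increase under `x ↦ x + 1`, its bound `e ^ (5/4)` on
`[1, 2]` persists on `[1, ∞)`, and `e ^ (5/4) ≤ 2 √π`. At `x = s + 1/2` the denominator is at most
`(s / e) ^ s`.
-/

theorem rpow_mul_Gamma_le_Gamma_add {x t : ℝ} (hx : 0 < x) (ht : 1 ≤ t) :
    x ^ t * Gamma x ≤ Gamma (x + t) := by
  have hΓ : 0 < Gamma x := Gamma_pos_of_pos hx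
  have slope_le : log x ≤ (log (Gamma (x + t)) - log (Gamma x)) / t := by
    have h := convexOn_log_Gamma.secant_mono (a := x) (x := x + 1) (y := x + t) hx
      (Set.mem_Ioi.mpr (by linarith)) (Set.mem_Ioi.mpr (by linarith)) (by linarith) (by linarith)
      (by linarith)
    simpa [Gamma_add_one hx.ne', log_mul hx.ne' hΓ.ne'] using h
  rw [← log_le_log_iff (by positivity) (Gamma_pos_of_pos (by linarith)),
    log_mul (by positivity) hΓ.ne', log_rpow hx]
  rw [le_div_iff₀ (by linarith)] at slope_le
  linarith

/-- Stirling's approximation to `Γ(x)`, without its constant factor `√(2π)`. -/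
def stirlingApprox (x : ℝ) : ℝ := x ^ (x - 1 / 2) * exp (-x)

theorem stirlingApprox_eq_exp {x : ℝ} (hx : 0 < x) :
    stirlingApprox x = exp ((x - 1 / 2) * log x - x) := by
  rw [stirlingApprox, rpow_def_of_pos hx, ← exp_add]
  ring_nf

theorem mul_stirlingApprox_le_stirlingApprox_add_one {x : ℝ} (hx : 0 < x) :
    x * stirlingApprox x ≤ stirlingApprox (x + 1) := by
  have log_add_one_ge : 1 ≤ (x + 1 / 2) * (log (x + 1) - log x) := by
    have h := le_log_one_add_of_nonneg (inv_nonneg.mpr hx.le)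
    rw [show 1 + x⁻¹ = (x + 1) / x by field_simp, log_div (by positivity) hx.ne'] at h
    calc 1 = (x + 1 / 2) * (2 * x⁻¹ / (x⁻¹ + 2)) := by field_simp; ring
      _ ≤ _ := by gcongr
  calc x * stirlingApprox x = exp (log x + ((x - 1 / 2) * log x - x)) := by
        rw [stirlingApprox_eq_exp hx, exp_add, exp_log hx]
    _ ≤ exp ((x + 1 - 1 / 2) * log (x + 1) - (x + 1)) := by gcongr; linarith
    _ = stirlingApprox (x + 1) := (stirlingApprox_eq_exp (by positivity)).symm

theorem stirlingApprox_add_half_le {s : ℝ} (hs : 0 < s) :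
    stirlingApprox (s + 1 / 2) ≤ (s / exp 1) ^ s := by
  have log_add_half_le : s * (log (s + 1 / 2) - log s) ≤ 1 / 2 := by
    rw [← log_div (by positivity) hs.ne']
    calc s * log ((s + 1 / 2) / s) ≤ s * ((s + 1 / 2) / s - 1) := by
          gcongr; exact log_le_sub_one_of_pos (by positivity)
      _ = 1 / 2 := by field_simp; ring
  rw [stirlingApprox_eq_exp (by positivity), rpow_def_of_pos (by positivity),
    log_div hs.ne' (exp_ne_zero 1), log_exp]
  gcongr
  linarith

theorem Gamma_le_one_of_mem_Icc {x : ℝ} (hx : x ∈ Set.Icc 1 2) : Gamma x ≤ 1 := by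
  simpa using convexOn_Gamma.le_max_of_mem_Icc (Set.mem_Ioi.mpr one_pos)
    (Set.mem_Ioi.mpr two_pos) hx

theorem one_le_exp_mul_stirlingApprox {x : ℝ} (hx : x ∈ Set.Icc 1 2) :
    1 ≤ exp (5 / 4) * stirlingApprox x := by
  obtain ⟨one_le, le_two⟩ := hx
  have hx : 0 < x := by linarith
  have half_le_inv : 1 / 2 ≤ x⁻¹ := by rw [one_div]; gcongr
  have exponent_nonneg : 0 ≤ 5 / 4 + ((x - 1 / 2) * log x - x) := by
    have h : (x - 1 / 2) * (1 - x⁻¹) ≤ (x - 1 / 2) * log x := by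
      gcongr
      · linarith
      · exact one_sub_inv_le_log_of_pos hx
    linarith [mul_inv_cancel₀ hx.ne']
  rw [stirlingApprox_eq_exp hx, ← exp_add]
  exact one_le_exp exponent_nonneg

theorem Gamma_le_exp_mul_stirlingApprox {x : ℝ} (hx : 1 ≤ x) :
    Gamma x ≤ exp (5 / 4) * stirlingApprox x := by
  obtain ⟨n, hn⟩ : ∃ n : ℕ, x ≤ n + 2 := (exists_nat_ge x).imp fun _ h => by linarith
  induction n generalizing x with
  | zero =>
    have hx' : x ∈ Set.Icc 1 2 := ⟨hx, by simpa using hn⟩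
    exact (Gamma_le_one_of_mem_Icc hx').trans (one_le_exp_mul_stirlingApprox hx')
  | succ n ih =>
    rcases le_total x 2 with le_two | two_le
    · exact (Gamma_le_one_of_mem_Icc ⟨hx, le_two⟩).trans
        (one_le_exp_mul_stirlingApprox ⟨hx, le_two⟩)
    obtain ⟨y, rfl⟩ : ∃ y, x = y + 1 := ⟨x - 1, by ring⟩
    have hy : 0 < y := by linarith
    calc Gamma (y + 1) = y * Gamma y := Gamma_add_one hy.ne'
      _ ≤ y * (exp (5 / 4) * stirlingApprox y) := by
          gcongr; exact ih (by linarith) (by push_cast at hn; linarith)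
      _ = exp (5 / 4) * (y * stirlingApprox y) := by ring
      _ ≤ exp (5 / 4) * stirlingApprox (y + 1) := by
          gcongr; exact mul_stirlingApprox_le_stirlingApprox_add_one hy

theorem exp_five_div_four_le_two_mul_sqrt_pi : exp (5 / 4) ≤ 2 * √π := by
  refine le_of_pow_le_pow_left₀ four_ne_zero (by positivity) ?_
  calc exp (5 / 4) ^ 4 = exp 1 ^ 5 := by simp only [← exp_nat_mul]; norm_num
    _ ≤ 2.7183 ^ 5 := by gcongr; linarith [exp_one_lt_d9]
    _ ≤ 16 * 3.14 ^ 2 := by norm_num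
    _ ≤ 16 * π ^ 2 := by gcongr; exact pi_gt_d2.le
    _ = (2 * √π) ^ 4 := by rw [mul_pow, pow_mul (√π) 2 2, sq_sqrt pi_nonneg]; norm_num

theorem Gamma_add_half_le {s : ℝ} (hs : 1 / 2 ≤ s) :
    Gamma (s + 1 / 2) ≤ 2 * √π * (s / exp 1) ^ s := by
  have hs₀ : 0 < s := by linarith
  calc Gamma (s + 1 / 2) ≤ exp (5 / 4) * stirlingApprox (s + 1 / 2) :=
        Gamma_le_exp_mul_stirlingApprox (by linarith)
    _ ≤ exp (5 / 4) * (s / exp 1) ^ s := by gcongr; exact stirlingApprox_add_half_le hs₀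
    _ ≤ 2 * √π * (s / exp 1) ^ s := by gcongr; exact exp_five_div_four_le_two_mul_sqrt_pi

theorem Gamma_two_mul_div_Gamma {s : ℝ} (hs : 0 < s) :
    Gamma (2 * s) / Gamma s = 4 ^ s * Gamma (s + 1 / 2) / (2 * √π) := by
  have hΓ : Gamma s ≠ 0 := (Gamma_pos_of_pos hs).ne'
  have duplication := Gamma_mul_Gamma_add_half s
  rw [rpow_sub two_pos, rpow_one, rpow_mul two_pos.le,
    show (2 : ℝ) ^ (2 : ℝ) = 4 by norm_num] at duplication
  field_simp [hΓ] at duplication ⊢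
  linarith

theorem Gamma_two_mul_div_Gamma_le {s : ℝ} (hs : 1 / 2 ≤ s) :
    Gamma (2 * s) / Gamma s ≤ (4 * s / exp 1) ^ s := by
  have hs₀ : 0 < s := by linarith
  calc Gamma (2 * s) / Gamma s = 4 ^ s * Gamma (s + 1 / 2) / (2 * √π) :=
        Gamma_two_mul_div_Gamma hs₀
    _ ≤ 4 ^ s * (2 * √π * (s / exp 1) ^ s) / (2 * √π) := by gcongr; exact Gamma_add_half_le hs
    _ = 4 ^ s * (s / exp 1) ^ s := by field_simp
    _ = (4 * s / exp 1) ^ s := by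
        rw [← mul_rpow (by positivity) (by positivity), mul_div_assoc]

theorem half_rpow_mul_Gamma_sub_le {a d : ℝ} (hd : 1 ≤ d) (ha : 2 * d ≤ a) :
    (a / 2) ^ d * Gamma (a - d) ≤ Gamma a := by
  have hΓ : 0 < Gamma (a - d) := Gamma_pos_of_pos (by linarith)
  calc (a / 2) ^ d * Gamma (a - d) ≤ (a - d) ^ d * Gamma (a - d) := by gcongr <;> linarith
    _ ≤ Gamma (a - d + d) := rpow_mul_Gamma_le_Gamma_add (by linarith) hd
    _ = Gamma a := by rw [sub_add_cancel]

theorem gamma_ratio_bounds_general (d : ℝ) (hd : 1 ≤ d) :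
    (∀ a : ℝ, 2 * d ≤ a →
        Gamma (a - d) / Gamma a ≤ (2 / a) ^ d ∧ (a / 2) ^ d * Gamma (a - d) ≤ Gamma a) ∧
      Gamma d / Gamma (d / 2) ≤ (2 * d / exp 1) ^ (d / 2) := by
  refine ⟨fun a ha => ?_, ?_⟩
  · have product_bound := half_rpow_mul_Gamma_sub_le hd ha
    have ha₀ : 0 < a := by linarith
    refine ⟨?_, product_bound⟩
    rwa [div_le_iff₀ (Gamma_pos_of_pos ha₀), ← inv_div a 2, inv_rpow (by positivity),
      le_inv_mul_iff₀ (by positivity)]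
  · have h := Gamma_two_mul_div_Gamma_le (s := d / 2) (by linarith)
    rwa [show 2 * (d / 2) = d by ring, show 4 * (d / 2) = 2 * d by ring] at h

/-- **Gamma-function ratio bounds.**
(i) For every real `a ≥ 2d`, `Γ(a−d)/Γ(a) ≤ (2/a)^d`, equivalently
    `Γ(a) ≥ (a/2)^d · Γ(a−d)`.
(ii) `Γ(d)/Γ(d/2) ≤ (2d/e)^{d/2}`. -/
theorem gamma_ratio_bounds (d : ℕ) (hd : 1 ≤ d) :
    (∀ a : ℝ, 2 * d ≤ a →
        Real.Gamma (a - d) / Real.Gamma a ≤ (2 / a) ^ d ∧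
          (a / 2) ^ d * Real.Gamma (a - d) ≤ Real.Gamma a) ∧
      Real.Gamma d / Real.Gamma (d / 2) ≤ (2 * d / Real.exp 1) ^ ((d : ℝ) / 2) := by
  simpa only [rpow_natCast] using gamma_ratio_bounds_general d (mod_cast hd)
end
end

section
/- Let d ≥ 1 be an integer, λ > 0, and let κ, R > 0 satisfy 0 < κ ≤ 1/e, κR ≥ 2, and (κR)² ≥ 16·log(1/κ). Set ε = d/λ. Then (λ/(2π))^{d/2} ∫_{‖x‖ ≥ R√ε} exp(−λκ‖x‖²/2) dx ≤ exp(−d·(κR)²/16). -/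
open MeasureTheory Real

noncomputable section

/-! To integrate `exp (-b ‖x‖ ^ 2)` over `{r ≤ ‖x‖}`, split the exponent as
`(b - c) ‖x‖ ^ 2 + c ‖x‖ ^ 2`: the first part is at least `(b - c) r ^ 2`, and the second leaves a
full Gaussian integral. For `b = λκ/2`, `c = b/2` and `r = R √(d/λ)`, this bounds the normalized
tail by `(exp (-κR²/2) * (2/κ)) ^ (d/2)`, and `2/κ ≤ exp (2/κ - 1)` is absorbed by the exponential
as soon as `κ ≤ 4` and `κR ≥ 2`. -/

theorem two_div_le_exp {κ R : ℝ} (hκ0 : 0 < κ) (hκ : κ ≤ 4) (hκR : 2 ≤ κ * R) :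
    2 / κ ≤ exp (κ * R ^ 2 / 2 - (κ * R) ^ 2 / 8) := by
  have hsq : 2 ^ 2 ≤ (κ * R) ^ 2 := by gcongr
  have hexponent : 2 / κ - 1 ≤ κ * R ^ 2 / 2 - (κ * R) ^ 2 / 8 :=
    calc 2 / κ - 1 ≤ 2 ^ 2 * ((4 - κ) / (8 * κ)) := by field_simp; linarith
      _ ≤ (κ * R) ^ 2 * ((4 - κ) / (8 * κ)) :=
        mul_le_mul_of_nonneg_right hsq (div_nonneg (sub_nonneg.2 hκ) (by positivity))
      _ = κ * R ^ 2 / 2 - (κ * R) ^ 2 / 8 := by field_simp; ring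
  calc 2 / κ ≤ exp (2 / κ - 1) := by linarith [add_one_le_exp (2 / κ - 1)]
    _ ≤ exp (κ * R ^ 2 / 2 - (κ * R) ^ 2 / 8) := exp_le_exp.2 hexponent

section InnerProductSpace

open Module

variable {V : Type*} [NormedAddCommGroup V] [InnerProductSpace ℝ V] [FiniteDimensional ℝ V]
  [MeasurableSpace V] [BorelSpace V]

theorem integrable_exp_neg_mul_sq_norm {b : ℝ} (hb : 0 < b) :
    Integrable fun x : V => exp (-b * ‖x‖ ^ 2) := by
  refine .of_integral_ne_zero ?_
  rw [GaussianFourier.integral_rexp_neg_mul_sq_norm hb]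
  positivity

theorem setIntegral_exp_neg_mul_sq_norm_le {b c r : ℝ} (hc : 0 < c) (hcb : c ≤ b) (hr : 0 ≤ r) :
    ∫ x in {x : V | r ≤ ‖x‖}, exp (-b * ‖x‖ ^ 2) ≤
      exp (-(b - c) * r ^ 2) * (π / c) ^ (finrank ℝ V / 2 : ℝ) := by
  have hintegrable_b : Integrable fun x : V => exp (-b * ‖x‖ ^ 2) :=
    integrable_exp_neg_mul_sq_norm (hc.trans_le hcb)
  have hintegrable_c : Integrable fun x : V => exp (-(b - c) * r ^ 2) * exp (-c * ‖x‖ ^ 2) :=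
    (integrable_exp_neg_mul_sq_norm hc).const_mul _
  have hpointwise (x : V) (hx : r ≤ ‖x‖) :
      exp (-b * ‖x‖ ^ 2) ≤ exp (-(b - c) * r ^ 2) * exp (-c * ‖x‖ ^ 2) := by
    have hsq : (b - c) * r ^ 2 ≤ (b - c) * ‖x‖ ^ 2 :=
      mul_le_mul_of_nonneg_left (by gcongr) (sub_nonneg.2 hcb)
    rw [← exp_add, exp_le_exp]
    linarith
  calc ∫ x in {x : V | r ≤ ‖x‖}, exp (-b * ‖x‖ ^ 2)
      ≤ ∫ x in {x : V | r ≤ ‖x‖}, exp (-(b - c) * r ^ 2) * exp (-c * ‖x‖ ^ 2) :=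
        setIntegral_mono_on hintegrable_b.integrableOn hintegrable_c.integrableOn
          (measurableSet_le measurable_const measurable_norm) hpointwise
    _ ≤ ∫ x : V, exp (-(b - c) * r ^ 2) * exp (-c * ‖x‖ ^ 2) :=
        setIntegral_le_integral hintegrable_c (.of_forall fun x => by positivity)
    _ = exp (-(b - c) * r ^ 2) * (π / c) ^ (finrank ℝ V / 2 : ℝ) := by
        rw [integral_const_mul, GaussianFourier.integral_rexp_neg_mul_sq_norm hc]

theorem normalized_setIntegral_exp_neg_le {lam κ c R : ℝ} (hlam : 0 < lam) (hc : 0 < c)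
    (hcκ : c ≤ κ) (hR : 0 ≤ R) :
    (lam / (2 * π)) ^ (finrank ℝ V / 2 : ℝ) *
        ∫ x in {x : V | R * √(finrank ℝ V / lam) ≤ ‖x‖}, exp (-(lam * κ * ‖x‖ ^ 2 / 2)) ≤
      (exp (-((κ - c) * R ^ 2)) / c) ^ (finrank ℝ V / 2 : ℝ) := by
  set p : ℝ := finrank ℝ V / 2 with hp
  set r : ℝ := R * √(finrank ℝ V / lam) with hr
  have hexp : exp (-(lam * κ / 2 - lam * c / 2) * r ^ 2) = exp (-((κ - c) * R ^ 2)) ^ p := by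
    rw [← exp_mul, hr, mul_pow, sq_sqrt (by positivity), hp]
    congr 1
    field_simp
  have hconst : lam / (2 * π) * (π / (lam * c / 2)) = 1 / c := by
    field_simp
  calc (lam / (2 * π)) ^ p * ∫ x in {x : V | r ≤ ‖x‖}, exp (-(lam * κ * ‖x‖ ^ 2 / 2))
      = (lam / (2 * π)) ^ p * ∫ x in {x : V | r ≤ ‖x‖}, exp (-(lam * κ / 2) * ‖x‖ ^ 2) := by
        ring_nf
    _ ≤ (lam / (2 * π)) ^ p *
        (exp (-(lam * κ / 2 - lam * c / 2) * r ^ 2) * (π / (lam * c / 2)) ^ p) := by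
        gcongr
        exact setIntegral_exp_neg_mul_sq_norm_le (by positivity) (by gcongr) (by positivity)
    _ = (exp (-((κ - c) * R ^ 2)) / c) ^ p := by
        rw [hexp, mul_left_comm, ← mul_rpow (by positivity) (by positivity), hconst,
          ← mul_rpow (by positivity) (by positivity), mul_one_div]

theorem gaussian_tail_bound_general {lam κ R : ℝ} (hlam : 0 < lam) (hκ0 : 0 < κ) (hκ : κ ≤ 4)
    (hκR : 2 ≤ κ * R) :
    (lam / (2 * π)) ^ (finrank ℝ V / 2 : ℝ) *
        ∫ x in {x : V | R * √(finrank ℝ V / lam) ≤ ‖x‖}, exp (-(lam * κ * ‖x‖ ^ 2 / 2)) ≤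
      exp (-(finrank ℝ V * (κ * R) ^ 2 / 16)) := by
  have hR : 0 ≤ R := (pos_of_mul_pos_right (two_pos.trans_le hκR) hκ0.le).le
  have hbase : exp (-((κ - κ / 2) * R ^ 2)) / (κ / 2) ≤ exp (-((κ * R) ^ 2 / 8)) :=
    calc exp (-((κ - κ / 2) * R ^ 2)) / (κ / 2)
        = exp (-((κ - κ / 2) * R ^ 2)) * (2 / κ) := by field_simp
      _ ≤ exp (-((κ - κ / 2) * R ^ 2)) * exp (κ * R ^ 2 / 2 - (κ * R) ^ 2 / 8) := by
        gcongr
        exact two_div_le_exp hκ0 hκ hκR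
      _ = exp (-((κ * R) ^ 2 / 8)) := by
        rw [← exp_add]
        ring_nf
  calc (lam / (2 * π)) ^ (finrank ℝ V / 2 : ℝ) *
        ∫ x in {x : V | R * √(finrank ℝ V / lam) ≤ ‖x‖}, exp (-(lam * κ * ‖x‖ ^ 2 / 2))
      ≤ (exp (-((κ - κ / 2) * R ^ 2)) / (κ / 2)) ^ (finrank ℝ V / 2 : ℝ) :=
        normalized_setIntegral_exp_neg_le hlam (half_pos hκ0) (half_le_self hκ0.le) hR
    _ ≤ exp (-((κ * R) ^ 2 / 8)) ^ (finrank ℝ V / 2 : ℝ) := by gcongr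
    _ = exp (-(finrank ℝ V * (κ * R) ^ 2 / 16)) := by
        rw [← exp_mul]
        ring_nf

end InnerProductSpace

/-- **Gaussian-tail integral bound.** For `0 < κ ≤ 1/e`, `κR ≥ 2`, `(κR)² ≥ 16 log(1/κ)`
and `ε = d/λ`,
`(λ/(2π))^{d/2} ∫_{‖x‖ ≥ R√ε} exp(−λκ‖x‖²/2) dx ≤ exp(−d(κR)²/16)`. -/
theorem gaussian_tail_bound (d : ℕ) (hd : 1 ≤ d) (lam κ R : ℝ) (hlam : 0 < lam)
    (hκ0 : 0 < κ) (hκ : κ ≤ 1 / Real.exp 1) (hR : 0 < R) (hκR : 2 ≤ κ * R)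
    (hκR2 : 16 * Real.log (1 / κ) ≤ (κ * R) ^ 2) :
    (lam / (2 * π)) ^ ((d : ℝ) / 2) *
        ∫ x in {x : EuclideanSpace ℝ (Fin d) | R * Real.sqrt ((d : ℝ) / lam) ≤ ‖x‖},
          Real.exp (-(lam * κ * ‖x‖ ^ 2 / 2)) ≤
      Real.exp (-(d * (κ * R) ^ 2 / 16)) := by
  have hκ4 : κ ≤ 4 := by linarith [div_le_one_of_le₀ (one_le_exp zero_le_one) (exp_pos 1).le]
  simpa only [finrank_euclideanSpace_fin] using
    gaussian_tail_bound_general (V := EuclideanSpace ℝ (Fin d)) hlam hκ0 hκ4 hκR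
end
end
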